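/- arXiv:2403.19858 — 5 statements merged into one kernel-verified Lean document; each statement's English description precedes it below -/
import Mathlib

section
/- Let A₁, A₂ ≥ 0 and let u : ℝᵈ × [0,1] → ℝᵈ be differentiable in x, with x ↦ u(x,t) Lipschitz with constant A₁ and x ↦ ∇ₓu(x,t) Lipschitz with constant A₂, uniformly in t ∈ [0,1]. Let ε ≥ 0 and let g : [0,1] → ℝᵈ be a continuous path with |g(s)| ≤ ε for all s. Let X, Y solve the perturbed integral equations X_t = x + ∫₀ᵗ u(X_s,s) ds + g(t), Y_t = y + ∫₀ᵗ u(Y_s,s) ds + g(t), and let X⁰, Y⁰ solve the unperturbed equations X⁰_t = x + ∫₀ᵗ u(X⁰_s,s) ds, Y⁰_t = y + ∫₀ᵗ u(Y⁰_s,s) ds. Then there exists a constant C₁, depending only on A₁ and A₂ (not on x, y, ε, g), such that |X₁ - Y₁ - (X⁰₁ - Y⁰₁)| ≤ C₁ (ε + |x - y|) |X⁰₁ - Y⁰₁|. (This is the pathwise content of Lemma 4.3 on the event {W₁* ≤ α} with ε = α√κ.) -/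
open MeasureTheory Set

lemma gron_aux (K c : ℝ) (hK : 0 ≤ K) (hc : 0 ≤ c) (f : ℝ → ℝ) (hf : Continuous f)
    (h : ∀ t ∈ Icc (0:ℝ) 1, f t ≤ c + K * ∫ s in (0:ℝ)..t, f s) :
    ∀ t ∈ Icc (0:ℝ) 1, f t ≤ c * Real.exp K := by
  intro t ht
  have hd : ∀ t : ℝ, HasDerivAt (fun t => Real.exp (-(K*t)) * (c + K * ∫ s in (0:ℝ)..t, f s))
      (Real.exp (-(K*t)) * (-K) * (c + K * ∫ s in (0:ℝ)..t, f s) + Real.exp (-(K*t)) * (K * f t)) t := by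
    intro t
    have h1 : HasDerivAt (fun t => ∫ s in (0:ℝ)..t, f s) (f t) t := hf.integral_hasStrictDerivAt 0 t |>.hasDerivAt
    have h2 : HasDerivAt (fun t : ℝ => -(K*t)) (-K) t := by
      have := ((hasDerivAt_id t).const_mul K).neg
      rw [mul_one] at this
      exact this
    exact h2.exp.mul ((h1.const_mul K).const_add c)
  have ha : AntitoneOn (fun t => Real.exp (-(K*t)) * (c + K * ∫ s in (0:ℝ)..t, f s)) (Icc 0 1) := by
    apply antitoneOn_of_deriv_nonpos (convex_Icc _ _)
    · exact fun t _ => (hd t).continuousAt.continuousWithinAt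
    · exact fun t _ => (hd t).differentiableAt.differentiableWithinAt
    · intro s hs
      rw [interior_Icc] at hs
      rw [(hd s).deriv]
      have := h s ⟨hs.1.le, hs.2.le⟩
      have : Real.exp (-(K*s)) * K * (f s - (c + K * ∫ s in (0:ℝ)..s, f s)) ≤ 0 :=
        mul_nonpos_of_nonneg_of_nonpos (by positivity) (by linarith)
      linarith
  have h0 := ha ⟨le_rfl, zero_le_one⟩ ht ht.1
  simp only [mul_zero, neg_zero, Real.exp_zero, intervalIntegral.integral_same, add_zero, one_mul] at h0
  have h1 : c + K * ∫ s in (0:ℝ)..t, f s ≤ c * Real.exp (K*t) := by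
    rw [Real.exp_neg] at h0
    have := mul_le_mul_of_nonneg_right h0 (Real.exp_pos (K*t)).le
    have h3 := (Real.exp_pos (K*t)).ne'
    calc _ = (Real.exp (K*t))⁻¹ * (c + K * ∫ s in (0:ℝ)..t, f s) * Real.exp (K*t) := by field_simp
      _ ≤ _ := this
  refine (h t ht).trans (h1.trans ?_)
  gcongr
  nlinarith [ht.2]

lemma gron {E : Type*} [NormedAddCommGroup E] [NormedSpace ℝ E] (K B c : ℝ) (hK : 0 ≤ K)
    (hB : 0 ≤ B) (hc : 0 ≤ c) (φ v : ℝ → E) (hφ : ContinuousOn φ (Icc 0 1))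
    (hv : ∀ s ∈ Icc (0:ℝ) 1, ‖v s‖ ≤ K * ‖φ s‖ + B)
    (h : ∀ t ∈ Icc (0:ℝ) 1, ‖φ t‖ ≤ c + ‖∫ s in (0:ℝ)..t, v s‖) :
    ∀ t ∈ Icc (0:ℝ) 1, ‖φ t‖ ≤ (c + B) * Real.exp K := by
  set f : ℝ → ℝ := IccExtend (zero_le_one' ℝ) (fun t => ‖φ t‖) with hfd
  have hf : Continuous f := by
    apply Continuous.Icc_extend'
    exact (continuousOn_iff_continuous_domRestrict.1 hφ).norm
  have hfe : ∀ t ∈ Icc (0:ℝ) 1, f t = ‖φ t‖ := fun t ht => IccExtend_of_mem _ _ ht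
  intro t ht
  rw [← hfe t ht]
  refine gron_aux K (c+B) hK (by positivity) f hf ?_ t ht
  intro t ht
  rw [hfe t ht]
  have : ‖∫ s in (0:ℝ)..t, v s‖ ≤ ∫ s in (0:ℝ)..t, (K * f s + B) := by
    apply intervalIntegral.norm_integral_le_of_norm_le ht.1
    · refine Filter.Eventually.of_forall fun s hs => ?_
      have hs' : s ∈ Icc (0:ℝ) 1 := ⟨hs.1.le, hs.2.trans ht.2⟩
      rw [hfe s hs']; exact hv s hs'
    · exact (by fun_prop : Continuous fun s => K * f s + B).intervalIntegrable _ _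
  rw [intervalIntegral.integral_add ((hf.const_mul K).intervalIntegrable _ _)
    (intervalIntegrable_const), intervalIntegral.integral_const_mul,
    intervalIntegral.integral_const] at this
  have h2 := h t ht
  simp only [sub_zero, smul_eq_mul] at this
  nlinarith [ht.2]

lemma sub_int {E : Type*} [NormedAddCommGroup E] [NormedSpace ℝ E] {v : ℝ → E}
    (hv : IntervalIntegrable v volume 0 1) {a b : ℝ} (ha : a ∈ Icc (0:ℝ) 1) (hb : b ∈ Icc (0:ℝ) 1) :
    IntervalIntegrable v volume a b := by
  apply hv.mono_set
  rw [uIcc_of_le (zero_le_one' ℝ)]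
  exact uIcc_subset_Icc ha hb

lemma cont_int {E : Type*} [NormedAddCommGroup E] [NormedSpace ℝ E] {v : ℝ → E}
    (hv : IntervalIntegrable v volume 0 1) :
    ContinuousOn (fun t => ∫ s in (0:ℝ)..t, v s) (Icc 0 1) := by
  have := intervalIntegral.continuousOn_primitive_interval (μ := volume) (f := v) (a := 0) (b := 1)
    (by rw [uIcc_of_le (zero_le_one' ℝ)]; exact (intervalIntegrable_iff_integrableOn_Icc_of_le zero_le_one).1 hv)
  rwa [uIcc_of_le (zero_le_one' ℝ)] at this

lemma four_pt {E : Type*} [NormedAddCommGroup E] [NormedSpace ℝ E] {A₁ A₂ : ℝ} (hA₁ : 0 ≤ A₁)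
    (hA₂ : 0 ≤ A₂) {f : E → E} {D : E → E →L[ℝ] E} (hD : ∀ z, HasFDerivAt f (D z) z)
    (h1 : LipschitzWith A₁.toNNReal f) (h2 : LipschitzWith A₂.toNNReal D) (a b a' b' : E) :
    ‖f a - f b - (f a' - f b')‖ ≤ A₁ * ‖a - b - (a' - b')‖ + A₂ * ‖b - b'‖ * ‖a' - b'‖ := by
  have e1 : ‖f a - f (b + (a' - b'))‖ ≤ A₁ * ‖a - b - (a' - b')‖ := by
    have := h1.norm_sub_le a (b + (a' - b'))
    rwa [Real.coe_toNNReal _ hA₁, ← sub_sub] at this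
  have e2 : ‖(f (b + (a' - b')) - f (b' + (a' - b'))) - (f (b + 0) - f (b' + 0))‖ ≤ A₂ * ‖b - b'‖ * ‖(a' - b') - 0‖ := by
    apply Convex.norm_image_sub_le_of_norm_hasFDerivWithin_le (s := univ)
      (f := fun w => f (b + w) - f (b' + w)) (f' := fun w => D (b + w) - D (b' + w)) _ _ convex_univ (mem_univ _) (mem_univ _)
    · intro w _
      have hs : ∀ q : E, HasFDerivAt (fun w => f (q + w)) (D (q + w)) w := fun q =>
        (hD (q + w)).comp w ((hasFDerivAt_id w).const_add q)
      exact ((hs b).sub (hs b')).hasFDerivWithinAt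
    · intro w _
      have := h2.norm_sub_le (b + w) (b' + w)
      rwa [Real.coe_toNNReal _ hA₂, add_sub_add_right_eq_sub] at this
  simp only [add_zero, sub_zero, add_sub_cancel] at e2
  have : f a - f b - (f a' - f b') = (f a - f (b + (a' - b'))) + (f (b + (a' - b')) - f a' - (f b - f b')) := by abel
  rw [this]
  exact (norm_add_le _ _).trans (add_le_add e1 e2)



/-- pathwise content of Lemma 4.3: if `X, Y` solve the integral
equation perturbed by a common path `g` with `|g| ≤ ε`, and `X⁰, Y⁰` solve the
unperturbed equation from the same initial points `x, y`, then the difference of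
differences at time one is controlled by `C₁ (ε + |x-y|) |X⁰₁ - Y⁰₁|`, where `C₁`
depends only on the Lipschitz constants `A₁` of `u(·,t)` and `A₂` of `∇ₓu(·,t)`. -/
theorem fourTermsDiff (A₁ A₂ : ℝ) (hA₁ : 0 ≤ A₁) (hA₂ : 0 ≤ A₂) :
    ∃ C₁ : ℝ, 0 < C₁ ∧
      ∀ (d : ℕ) (u : EuclideanSpace ℝ (Fin d) → ℝ → EuclideanSpace ℝ (Fin d))
        (Du : EuclideanSpace ℝ (Fin d) → ℝ →
          (EuclideanSpace ℝ (Fin d) →L[ℝ] EuclideanSpace ℝ (Fin d))),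
        Measurable (fun p : EuclideanSpace ℝ (Fin d) × ℝ => u p.1 p.2) →
        (∀ t ∈ Icc (0 : ℝ) 1, ∀ z, HasFDerivAt (fun w => u w t) (Du z t) z) →
        (∀ t ∈ Icc (0 : ℝ) 1, LipschitzWith A₁.toNNReal (fun z => u z t)) →
        (∀ t ∈ Icc (0 : ℝ) 1, LipschitzWith A₂.toNNReal (fun z => Du z t)) →
        ∀ (ε : ℝ), 0 ≤ ε →
        ∀ (g : ℝ → EuclideanSpace ℝ (Fin d)), ContinuousOn g (Icc (0 : ℝ) 1) →
        (∀ s ∈ Icc (0 : ℝ) 1, ‖g s‖ ≤ ε) →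
        ∀ (x y : EuclideanSpace ℝ (Fin d)) (X Y X0 Y0 : ℝ → EuclideanSpace ℝ (Fin d)),
        IntervalIntegrable (fun s => u (X s) s) volume 0 1 →
        IntervalIntegrable (fun s => u (Y s) s) volume 0 1 →
        IntervalIntegrable (fun s => u (X0 s) s) volume 0 1 →
        IntervalIntegrable (fun s => u (Y0 s) s) volume 0 1 →
        (∀ t ∈ Icc (0 : ℝ) 1, X t = x + (∫ s in (0 : ℝ)..t, u (X s) s) + g t) →
        (∀ t ∈ Icc (0 : ℝ) 1, Y t = y + (∫ s in (0 : ℝ)..t, u (Y s) s) + g t) →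
        (∀ t ∈ Icc (0 : ℝ) 1, X0 t = x + (∫ s in (0 : ℝ)..t, u (X0 s) s)) →
        (∀ t ∈ Icc (0 : ℝ) 1, Y0 t = y + (∫ s in (0 : ℝ)..t, u (Y0 s) s)) →
        ‖X 1 - Y 1 - (X0 1 - Y0 1)‖ ≤ C₁ * (ε + ‖x - y‖) * ‖X0 1 - Y0 1‖ := by
  refine ⟨A₂ * Real.exp A₁ ^ 3 + 1, by positivity, ?_⟩
  intro d u Du _ hD hL1 hL2 ε hε g hg hgε x y X Y X0 Y0 iX iY iX0 iY0 eX eY eX0 eY0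
  have lip : ∀ s ∈ Icc (0:ℝ) 1, ∀ a b, ‖u a s - u b s‖ ≤ A₁ * ‖a - b‖ := by
    intro s hs a b
    have := (hL1 s hs).norm_sub_le a b
    rwa [Real.coe_toNNReal _ hA₁] at this
  have cX : ContinuousOn X (Icc 0 1) :=
    ((continuousOn_const.add (cont_int iX)).add hg).congr eX
  have cY : ContinuousOn Y (Icc 0 1) :=
    ((continuousOn_const.add (cont_int iY)).add hg).congr eY
  have cX0 : ContinuousOn X0 (Icc 0 1) := (continuousOn_const.add (cont_int iX0)).congr eX0
  have cY0 : ContinuousOn Y0 (Icc 0 1) := (continuousOn_const.add (cont_int iY0)).congr eY0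
  have z : (0:ℝ) ∈ Icc (0:ℝ) 1 := by simp
  have o : (1:ℝ) ∈ Icc (0:ℝ) 1 := by simp
  -- bound of `Y - Y0`
  have bY : ∀ t ∈ Icc (0:ℝ) 1, ‖Y t - Y0 t‖ ≤ (ε + 0) * Real.exp A₁ := by
    apply gron A₁ 0 ε hA₁ le_rfl hε (fun t => Y t - Y0 t) (fun s => u (Y s) s - u (Y0 s) s)
      (cY.sub cY0)
    · intro s hs; simpa using lip s hs _ _
    · intro t ht
      rw [intervalIntegral.integral_sub (sub_int iY z ht) (sub_int iY0 z ht)]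
      have : Y t - Y0 t = g t + ((∫ s in (0:ℝ)..t, u (Y s) s) - ∫ s in (0:ℝ)..t, u (Y0 s) s) := by
        rw [eY t ht, eY0 t ht]; abel
      simp only [this]
      exact (norm_add_le _ _).trans (by gcongr; exact hgε t ht)
  -- backward bound of `X0 - Y0`
  have bQ' : ∀ t ∈ Icc (0:ℝ) 1, ‖X0 (1 - t) - Y0 (1 - t)‖ ≤ (‖X0 1 - Y0 1‖ + 0) * Real.exp A₁ := by
    have hm : ∀ t ∈ Icc (0:ℝ) 1, 1 - t ∈ Icc (0:ℝ) 1 :=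
      fun t ht => ⟨by linarith [ht.2], by linarith [ht.1]⟩
    apply gron A₁ 0 _ hA₁ le_rfl (norm_nonneg _) (fun t => X0 (1 - t) - Y0 (1 - t))
      (fun s => u (X0 (1 - s)) (1 - s) - u (Y0 (1 - s)) (1 - s))
    · exact (cX0.sub cY0).comp (by fun_prop : ContinuousOn (fun t : ℝ => 1 - t) (Icc 0 1)) hm
    · intro s hs; simpa using lip _ (hm s hs) _ _
    · intro t ht
      have ht' := hm t ht
      rw [intervalIntegral.integral_comp_sub_left (fun s => u (X0 s) s - u (Y0 s) s) 1, sub_zero,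
        intervalIntegral.integral_sub (sub_int iX0 ht' o) (sub_int iY0 ht' o),
        ← intervalIntegral.integral_interval_sub_left iX0 (sub_int iX0 z ht'),
        ← intervalIntegral.integral_interval_sub_left iY0 (sub_int iY0 z ht')]
      refine le_trans (le_of_eq ?_) (norm_sub_le _ _)
      rw [eX0 _ ht', eY0 _ ht', eX0 1 o, eY0 1 o]
      congr 1; abel
  have bQ : ∀ t ∈ Icc (0:ℝ) 1, ‖X0 t - Y0 t‖ ≤ ‖X0 1 - Y0 1‖ * Real.exp A₁ := by
    intro t ht
    have := bQ' (1 - t) ⟨by linarith [ht.2], by linarith [ht.1]⟩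
    simpa using this
  have bR := gron A₁ (A₂ * (ε * Real.exp A₁) * (‖X0 1 - Y0 1‖ * Real.exp A₁)) 0 hA₁
    (by positivity) le_rfl (fun t => X t - Y t - (X0 t - Y0 t))
    (fun s => u (X s) s - u (Y s) s - (u (X0 s) s - u (Y0 s) s))
    ((cX.sub cY).sub (cX0.sub cY0)) (by
      intro s hs
      refine (four_pt hA₁ hA₂ (hD s hs) (hL1 s hs) (hL2 s hs) _ _ _ _).trans ?_
      have h1 := bY s hs
      rw [add_zero] at h1
      gcongr
      exact bQ s hs) (by
      intro t ht
      rw [intervalIntegral.integral_sub ((sub_int iX z ht).sub (sub_int iY z ht))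
          ((sub_int iX0 z ht).sub (sub_int iY0 z ht)),
        intervalIntegral.integral_sub (sub_int iX z ht) (sub_int iY z ht),
        intervalIntegral.integral_sub (sub_int iX0 z ht) (sub_int iY0 z ht), zero_add]
      refine le_of_eq ?_
      rw [eX t ht, eY t ht, eX0 t ht, eY0 t ht]
      congr 1; abel) 1 o
  refine bR.trans ?_
  have hq := norm_nonneg (X0 1 - Y0 1)
  have hx := norm_nonneg (x - y)
  have hM : 0 ≤ A₂ * Real.exp A₁ ^ 3 := by positivity
  calc _ = (A₂ * Real.exp A₁ ^ 3) * ε * ‖X0 1 - Y0 1‖ := by ring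
    _ ≤ _ := by gcongr <;> linarith
end

section
/- (Lemma 6.2) Let r > 0 and let f : B_r ⊆ ℝᴺ → ℝᵈ be a C¹ function with f(0) = 0 and rank(Df(0)) = d. Then there exist δ > 0 and s > 0 such that for every Lipschitz function g : ℝᴺ → ℝᵈ with sup_{x ∈ B_r} |f(x) - g(x)| ≤ δ, one has g(B_r) ⊇ B_s. Here B_r denotes the open ball of radius r centered at the origin (in ℝᴺ on the left, in ℝᵈ on the right). -/
open Metric

open MeasureTheory Set in
theorem aux_det_pos {E : Type*} [NormedAddCommGroup E] [NormedSpace ℝ E]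
    [FiniteDimensional ℝ E] (A : E →L[ℝ] E) (hA : ‖A‖ < 1) :
    0 < (ContinuousLinearMap.id ℝ E + A).det := by
  have hne : ∀ s ∈ Icc (0:ℝ) 1, (ContinuousLinearMap.id ℝ E + s • A).det ≠ 0 := by
    intro s hs h0
    have h1 : LinearMap.det ((ContinuousLinearMap.id ℝ E + s • A : E →L[ℝ] E) : E →ₗ[ℝ] E) = 0 := h0
    obtain ⟨v, hv, hv0⟩ := (Submodule.ne_bot_iff _).1 (LinearMap.bot_lt_ker_of_det_eq_zero h1).ne'
    have h2 : v + s • A v = 0 := by simpa using hv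
    have h3 : ‖v‖ = ‖s • A v‖ := by
      rw [eq_neg_of_add_eq_zero_left h2, norm_neg, ← eq_neg_of_add_eq_zero_left h2]
    have h4 : ‖s • A v‖ ≤ 1 * (‖A‖ * ‖v‖) := by
      rw [norm_smul]
      have : ‖s‖ ≤ 1 := by rw [Real.norm_of_nonneg hs.1]; exact hs.2
      gcongr
      exact A.le_opNorm v
    have h5 : 0 < ‖v‖ := norm_pos_iff.2 hv0
    nlinarith
  by_contra hneg
  push Not at hneg
  have hc : ContinuousOn (fun s : ℝ => (ContinuousLinearMap.id ℝ E + s • A).det) (Icc 0 1) := by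
    apply Continuous.continuousOn
    exact ContinuousLinearMap.continuous_det.comp (by fun_prop)
  have := intermediate_value_Icc' (zero_le_one) hc
  have h0 : (0:ℝ) ∈ Icc ((ContinuousLinearMap.id ℝ E + (1:ℝ) • A).det)
      ((ContinuousLinearMap.id ℝ E + (0:ℝ) • A).det) := by
    constructor
    · simpa using hneg
    · have : (ContinuousLinearMap.id ℝ E).det = 1 := LinearMap.det_id
      simp [this]
  obtain ⟨s, hs, h⟩ := this h0
  exact hne s hs h

open MeasureTheory Set in
theorem aux_cov {E : Type*} [NormedAddCommGroup E] [NormedSpace ℝ E]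
    [FiniteDimensional ℝ E] [MeasurableSpace E] [BorelSpace E]
    (μ : Measure E) [μ.IsAddHaarMeasure]
    (hnull : ∀ (f : E → E) (K : NNReal), LipschitzWith K f → ∀ s, μ s = 0 → μ (f '' s) = 0)
    (φ : E → E) (K : NNReal) (hφ : LipschitzWith K φ) (R : ℝ)
    (hR : ∀ x, x ∉ closedBall (0:E) R → φ x = 0)
    (t : ℝ) (ht0 : 0 < t) (ht : t * K < 1) (P : E → ℝ) :
    ∫ x in closedBall (0:E) R, P (x + t • φ x) *
      (ContinuousLinearMap.id ℝ E + t • fderiv ℝ φ x).det ∂μ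
      = ∫ x in closedBall (0:E) R, P x ∂μ := by
  have : CompleteSpace E := FiniteDimensional.complete ℝ E
  set f : E → E := fun x => x + t • φ x with hf
  set B := closedBall (0:E) R
  have hlip : ∀ x y, ‖t • φ x - t • φ y‖ ≤ t * K * ‖x - y‖ := by
    intro x y
    rw [← smul_sub, norm_smul, Real.norm_of_nonneg ht0.le, mul_assoc]
    gcongr
    exact hφ.norm_sub_le x y
  have hinj : Function.Injective f := by
    intro x y hxy
    have h1 : x - y = -(t • φ x - t • φ y) := by
      have : x + t • φ x = y + t • φ y := hxy
      rw [neg_sub, sub_eq_sub_iff_add_eq_add, this, add_comm]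
    have h2 := hlip x y
    rw [← norm_neg, ← h1] at h2
    by_contra hne
    have : 0 < ‖x - y‖ := norm_pos_iff.2 (sub_ne_zero.2 hne)
    nlinarith
  have hsurj : Function.Surjective f := by
    intro y
    have hc : ContractingWith (t.toNNReal * K) (fun x => y - t • φ x) := by
      refine ⟨?_, ?_⟩
      · rw [← NNReal.coe_lt_coe]; simpa [ht0.le] using ht
      · apply LipschitzWith.of_dist_le_mul
        intro a b
        rw [dist_eq_norm, dist_eq_norm, sub_sub_sub_cancel_left, norm_sub_rev]
        simpa [ht0.le] using hlip a b
    have := hc.fixedPoint_isFixedPt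
    refine ⟨ContractingWith.fixedPoint _ hc, ?_⟩
    have h2 : y - t • φ (ContractingWith.fixedPoint _ hc) = ContractingWith.fixedPoint _ hc := this
    simp only [hf]
    nth_rewrite 1 [← h2]
    simp
  have hout : ∀ x, x ∉ B → f x = x := by
    intro x hx; simp [hf, hR x hx]
  have himg : f '' B = B := by
    apply Subset.antisymm
    · rintro _ ⟨x, hx, rfl⟩
      by_contra h
      have := hinj (hout _ h)
      rw [this] at h
      exact h hx
    · intro y hy
      obtain ⟨x, rfl⟩ := hsurj y
      by_cases hx : x ∈ B
      · exact ⟨x, hx, rfl⟩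
      · rw [hout x hx] at hy; exact absurd hy hx
  have hflip : LipschitzWith (1 + t.toNNReal * K) f := by
    apply LipschitzWith.id.add
    apply LipschitzWith.of_dist_le_mul
    intro a b
    rw [dist_eq_norm, dist_eq_norm]
    simpa [ht0.le] using hlip a b
  set D := {x | DifferentiableAt ℝ φ x}
  have hD : MeasurableSet D := measurableSet_of_differentiableAt ℝ φ
  have hDc : μ Dᶜ = 0 := hφ.ae_differentiableAt
  have hBm : MeasurableSet B := isClosed_closedBall.measurableSet
  have hder : ∀ x ∈ B ∩ D, HasFDerivWithinAt f
      (ContinuousLinearMap.id ℝ E + t • fderiv ℝ φ x) (B ∩ D) x := by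
    intro x hx
    exact ((hasFDerivAt_id x).add ((hx.2.hasFDerivAt).const_smul t)).hasFDerivWithinAt
  have key := integral_image_eq_integral_abs_det_fderiv_smul μ (hBm.inter hD) hder hinj.injOn P
  have e1 : (f '' (B ∩ D) : Set E) =ᵐ[μ] B := by
    have h1 : f '' (B ∩ D) ⊆ B := (image_mono inter_subset_left).trans himg.subset
    refine (LE.le.eventuallyLE h1).antisymm ?_
    rw [ae_le_set]
    apply measure_mono_null _ (hnull f _ hflip _ hDc)
    rintro y ⟨hy, hy2⟩
    rw [← himg] at hy
    obtain ⟨x, hx, rfl⟩ := hy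
    exact ⟨x, fun hxD => hy2 ⟨x, ⟨hx, hxD⟩, rfl⟩, rfl⟩
  have e2 : (B ∩ D : Set E) =ᵐ[μ] B := by
    refine (LE.le.eventuallyLE inter_subset_left).antisymm ?_
    rw [ae_le_set]
    apply measure_mono_null _ hDc
    rintro y ⟨hy, hy2⟩ h
    exact hy2 ⟨hy, h⟩
  rw [setIntegral_congr_set e1, setIntegral_congr_set e2] at key
  rw [key]
  congr 1
  ext x
  have : 0 < (ContinuousLinearMap.id ℝ E + t • fderiv ℝ φ x).det := by
    apply aux_det_pos
    rw [norm_smul, Real.norm_of_nonneg ht0.le]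
    have := norm_fderiv_le_of_lipschitz ℝ (x₀ := x) hφ
    nlinarith
  rw [abs_of_pos this, smul_eq_mul, mul_comm]

open Polynomial in
theorem aux_poly {E : Type*} [NormedAddCommGroup E] [InnerProductSpace ℝ E]
    [FiniteDimensional ℝ E] (A : E →L[ℝ] E) (x v : E) (c : ℝ) (k : ℕ) :
    ∃ p : ℝ[X], p.natDegree ≤ 2 * k + Module.finrank ℝ E ∧ ∀ t : ℝ, p.eval t =
      (c - ‖x + t • v‖ ^ 2) ^ k * (ContinuousLinearMap.id ℝ E + t • A).det := by
  classical
  let b := Module.finBasis ℝ E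
  let M := LinearMap.toMatrix b b (A : E →ₗ[ℝ] E)
  let q : ℝ[X] := C (-‖v‖ ^ 2) * X ^ 2 + C (-2 * inner ℝ x v) * X + C (c - ‖x‖ ^ 2)
  refine ⟨q ^ k * Matrix.det ((X : ℝ[X]) • M.map C + (1 : Matrix _ _ ℝ).map C), ?_, ?_⟩
  · refine natDegree_mul_le.trans (add_le_add ?_ ?_)
    · refine natDegree_pow_le.trans ?_
      rw [mul_comm]
      gcongr
      exact natDegree_quadratic_le
    · refine (Polynomial.natDegree_det_X_add_C_le M 1).trans ?_
      simp
  · intro t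
    rw [eval_mul, eval_pow]
    congr 2
    · simp only [q, eval_add, eval_mul, eval_C, eval_pow, eval_X]
      rw [norm_add_sq_real, norm_smul, inner_smul_right, mul_pow, Real.norm_eq_abs, sq_abs]
      ring
    · rw [← coe_evalRingHom, RingHom.map_det]
      change _ = LinearMap.det _
      rw [← LinearMap.det_toMatrix b]
      congr 1
      ext i j
      simp [M, Matrix.one_apply, LinearMap.toMatrix_apply, Module.Basis.repr_self, Finsupp.single_apply]
      by_cases h : i = j
      · subst h; simp; ring
      · have h' : ¬ j = i := fun e => h e.symm
        simp [h, h']; ring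

open Polynomial in
theorem aux_lagrange (n : ℕ) (τ : ℝ) (hτ : 0 < τ) :
    ∃ (w v : ℕ → ℝ), (∀ i, 0 < v i ∧ v i ≤ τ) ∧ (∑ i ∈ Finset.range (n+1), w i = 1) ∧
      ∀ p : ℝ[X], p.natDegree ≤ n → p.eval 1 = ∑ i ∈ Finset.range (n+1), w i * p.eval (v i) := by
  let v : ℕ → ℝ := fun i => τ / (i + 1)
  have hv : Set.InjOn v (Finset.range (n+1)) := by
    intro i _ j _ h
    simp only [v] at h
    rw [div_eq_div_iff (by positivity) (by positivity)] at h
    have := mul_left_cancel₀ hτ.ne' h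
    have : (j:ℝ) = i := by linarith
    exact_mod_cast this.symm
  refine ⟨fun i => (Lagrange.basis (Finset.range (n+1)) v i).eval 1, v, ?_, ?_, ?_⟩
  · intro i
    refine ⟨by positivity, ?_⟩
    apply div_le_self hτ.le
    have : (0:ℝ) ≤ i := by positivity
    linarith
  · rw [← eval_finsetSum, Lagrange.sum_basis hv (by simp), eval_one]
  · intro p hp
    have h := Lagrange.eq_interpolate (f := p) hv (by
      simp only [Finset.card_range]
      refine degree_le_natDegree.trans_lt ?_
      exact_mod_cast Nat.lt_succ_of_le hp)
    conv_lhs => rw [h, Lagrange.interpolate_apply, eval_finsetSum]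
    refine Finset.sum_congr rfl fun i _ => ?_
    rw [eval_mul, eval_C, mul_comm]

open MeasureTheory Set in
theorem aux_integral_one {E : Type*} [NormedAddCommGroup E] [InnerProductSpace ℝ E]
    [FiniteDimensional ℝ E] [MeasurableSpace E] [BorelSpace E]
    (μ : Measure E) [μ.IsAddHaarMeasure]
    (hnull : ∀ (f : E → E) (K : NNReal), LipschitzWith K f → ∀ s, μ s = 0 → μ (f '' s) = 0)
    (φ : E → E) (K : NNReal) (hφ : LipschitzWith K φ) (R : ℝ)
    (hR : ∀ x, x ∉ closedBall (0:E) R → φ x = 0) (c : ℝ) (k : ℕ) :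
    ∫ x in closedBall (0:E) R, (c - ‖x + φ x‖ ^ 2) ^ k *
      (ContinuousLinearMap.id ℝ E + fderiv ℝ φ x).det ∂μ
      = ∫ x in closedBall (0:E) R, (c - ‖x‖ ^ 2) ^ k ∂μ := by
  have : CompleteSpace E := FiniteDimensional.complete ℝ E
  have : ProperSpace E := FiniteDimensional.proper_real E
  obtain ⟨w, v, hv, hw, hp⟩ := aux_lagrange (2 * k + Module.finrank ℝ E) (1 / (K + 1)) (by positivity)
  have hint : ∀ t : ℝ, IntegrableOn (fun x => (c - ‖x + t • φ x‖ ^ 2) ^ k *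
      (ContinuousLinearMap.id ℝ E + t • fderiv ℝ φ x).det) (closedBall (0:E) R) μ := by
    intro t
    have hcd : Continuous fun A : E →L[ℝ] E => (ContinuousLinearMap.id ℝ E + t • A).det :=
      ContinuousLinearMap.continuous_det.comp (by fun_prop)
    obtain ⟨M, hM⟩ := (isCompact_closedBall (0 : E →L[ℝ] E) K).exists_bound_of_continuousOn
      hcd.continuousOn
    have hφc := hφ.continuous
    have h1 : IntegrableOn (fun x => (c - ‖x + t • φ x‖ ^ 2) ^ k) (closedBall (0:E) R) μ := by
      apply ContinuousOn.integrableOn_compact (isCompact_closedBall _ _)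
      apply Continuous.continuousOn
      fun_prop
    refine Integrable.mul_bdd (c := M) h1 ?_ ?_
    · exact (hcd.measurable.comp (measurable_fderiv ℝ φ)).aestronglyMeasurable
    · refine Filter.Eventually.of_forall fun x => hM _ ?_
      rw [mem_closedBall_zero_iff]
      exact norm_fderiv_le_of_lipschitz ℝ hφ
  have hpt : ∀ x, (c - ‖x + φ x‖ ^ 2) ^ k * (ContinuousLinearMap.id ℝ E + fderiv ℝ φ x).det
      = ∑ i ∈ Finset.range (2 * k + Module.finrank ℝ E + 1), w i * ((c - ‖x + v i • φ x‖ ^ 2) ^ k *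
      (ContinuousLinearMap.id ℝ E + v i • fderiv ℝ φ x).det) := by
    intro x
    obtain ⟨p, hpd, hpe⟩ := aux_poly (fderiv ℝ φ x) x (φ x) c k
    have := hp p hpd
    simpa [hpe] using this
  simp_rw [hpt]
  rw [integral_finsetSum _ (fun i _ => (hint (v i)).const_mul (w i))]
  have : ∀ i, ∫ x in closedBall (0:E) R, w i * ((c - ‖x + v i • φ x‖ ^ 2) ^ k *
      (ContinuousLinearMap.id ℝ E + v i • fderiv ℝ φ x).det) ∂μ =
      w i * ∫ x in closedBall (0:E) R, (c - ‖x‖ ^ 2) ^ k ∂μ := by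
    intro i
    rw [integral_const_mul, aux_cov μ hnull φ K hφ R hR (v i) (hv i).1 _ (fun y => (c - ‖y‖^2)^k)]
    calc v i * K ≤ 1 / (K + 1) * K := by gcongr; exact (hv i).2
      _ < 1 := by
        rw [one_div, inv_mul_lt_one₀ (by positivity)]; linarith
  simp_rw [this]
  rw [← Finset.sum_mul, hw, one_mul]

open MeasureTheory Set in
theorem aux_zero {E : Type*} [NormedAddCommGroup E] [InnerProductSpace ℝ E]
    [FiniteDimensional ℝ E]
    (φ : E → E) (K : NNReal) (hφ : LipschitzWith K φ) (R : ℝ) (hR0 : 0 < R)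
    (hR : ∀ x, x ∉ closedBall (0:E) R → φ x = 0) : ∃ x, x + φ x = 0 := by
  have : CompleteSpace E := FiniteDimensional.complete ℝ E
  have : ProperSpace E := FiniteDimensional.proper_real E
  borelize E
  let μ : Measure E := μH[Module.finrank ℝ E]
  have hμ : μ.IsAddHaarMeasure := isAddHaarMeasure_hausdorffMeasure
  have hnull : ∀ (f : E → E) (K : NNReal), LipschitzWith K f → ∀ s, μ s = 0 → μ (f '' s) = 0 := by
    intro f K hf s hs
    have := hf.hausdorffMeasure_image_le (d := Module.finrank ℝ E) (by positivity) s
    change μ _ ≤ _ * μ s at this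
    rw [hs, mul_zero] at this
    exact le_antisymm this (zero_le)
  clear_value μ
  by_contra hno
  push Not at hno
  have hφc := hφ.continuous
  have hB : IsCompact (closedBall (0:E) R) := isCompact_closedBall _ _
  have hG : ContinuousOn (fun x => ‖x + φ x‖) (closedBall (0:E) R) :=
    Continuous.continuousOn (by fun_prop)
  obtain ⟨x0, hx0, hmin⟩ := hB.exists_isMinOn ⟨0, by simp [hR0.le]⟩ hG
  obtain ⟨C0, hC0⟩ := hB.exists_bound_of_continuousOn hG
  set ε := ‖x0 + φ x0‖ with hε
  have hεpos : 0 < ε := norm_pos_iff.2 (hno x0)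
  obtain ⟨M, hM⟩ := (isCompact_closedBall (0 : E →L[ℝ] E) K).exists_bound_of_continuousOn
      (f := fun A : E →L[ℝ] E => (ContinuousLinearMap.id ℝ E + A).det)
      (ContinuousLinearMap.continuous_det.comp (by fun_prop)).continuousOn
  have hM' : ∀ x, ‖(ContinuousLinearMap.id ℝ E + fderiv ℝ φ x).det‖ ≤ M := fun x => hM _ (by
      rw [mem_closedBall_zero_iff]
      exact norm_fderiv_le_of_lipschitz ℝ hφ)
  set c := C0 ^ 2 + R ^ 2 + ε ^ 2 with hc
  set ρ := min R (ε / 2) with hρ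
  have hρpos : 0 < ρ := lt_min hR0 (by positivity)
  set a := c - ε ^ 2 with ha
  set b := c - ρ ^ 2 with hb
  have hρε : ρ ≤ ε / 2 := min_le_right _ _
  have hρR : ρ ≤ R := min_le_left _ _
  have ha0 : 0 < a := by rw [ha, hc]; nlinarith [sq_nonneg C0]
  have hab : a < b := by rw [ha, hb]; nlinarith
  set V := μ.real (closedBall (0:E) R)
  set W := μ.real (closedBall (0:E) ρ)
  have hW : 0 < W := by
    apply ENNReal.toReal_pos
    · exact (measure_closedBall_pos μ 0 hρpos).ne'
    · exact measure_closedBall_lt_top.ne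
  have hkey : ∀ k : ℕ, b ^ k * W ≤ a ^ k * M * V := by
    intro k
    have h := aux_integral_one μ hnull φ K hφ R hR c k
    have hup : ‖∫ x in closedBall (0:E) R, (c - ‖x + φ x‖ ^ 2) ^ k *
      (ContinuousLinearMap.id ℝ E + fderiv ℝ φ x).det ∂μ‖ ≤ a ^ k * M * V := by
      apply norm_setIntegral_le_of_norm_le_const measure_closedBall_lt_top
      intro x hx
      have h1 : ε ≤ ‖x + φ x‖ := hmin hx
      have h2 : ‖x + φ x‖ ≤ C0 := by simpa using hC0 x hx
      have h3 : 0 ≤ c - ‖x + φ x‖ ^ 2 := by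
        have : ‖x + φ x‖ ^ 2 ≤ C0 ^ 2 := by gcongr
        nlinarith
      rw [norm_mul, norm_pow, Real.norm_of_nonneg h3]
      gcongr
      · rw [ha]; gcongr
      · exact hM' x
    have hlow : b ^ k * W ≤ ∫ x in closedBall (0:E) R, (c - ‖x‖ ^ 2) ^ k ∂μ := by
      have hci : IntegrableOn (fun x : E => (c - ‖x‖ ^ 2) ^ k) (closedBall (0:E) R) μ :=
        ContinuousOn.integrableOn_compact hB (Continuous.continuousOn (by fun_prop))
      have hsub : closedBall (0:E) ρ ⊆ closedBall 0 R := closedBall_subset_closedBall hρR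
      calc b ^ k * W = ∫ x in closedBall (0:E) ρ, b ^ k ∂μ := by
            rw [setIntegral_const, smul_eq_mul, mul_comm]
        _ ≤ ∫ x in closedBall (0:E) ρ, (c - ‖x‖ ^ 2) ^ k ∂μ := by
            apply setIntegral_mono_on _ (hci.mono_set hsub) isClosed_closedBall.measurableSet
            · intro x hx
              rw [mem_closedBall_zero_iff] at hx
              have : 0 ≤ b := by linarith
              rw [hb] at this ⊢
              gcongr
            · exact integrableOn_const measure_closedBall_lt_top.ne
        _ ≤ _ := by
            apply setIntegral_mono_set hci _ hsub.eventuallyLE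
            rw [Filter.EventuallyLE, ae_restrict_iff' isClosed_closedBall.measurableSet]
            refine Filter.Eventually.of_forall fun x hx => ?_
            rw [mem_closedBall_zero_iff] at hx
            apply pow_nonneg
            have : ‖x‖ ^ 2 ≤ R ^ 2 := by gcongr
            nlinarith [sq_nonneg C0, sq_nonneg ε]
    rw [← h] at hlow
    exact hlow.trans ((le_abs_self _).trans hup)
  have hb0 : 0 < b := ha0.trans hab
  have hlim : Filter.Tendsto (fun k : ℕ => (a / b) ^ k * (M * V)) Filter.atTop (nhds (0 * (M * V))) :=
    (tendsto_pow_atTop_nhds_zero_of_lt_one (by positivity) ((div_lt_one hb0).2 hab)).mul_const _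
  rw [zero_mul] at hlim
  have : W ≤ 0 := by
    refine ge_of_tendsto' hlim fun k => ?_
    rw [div_pow, div_mul_eq_mul_div, le_div_iff₀ (by positivity)]
    have := hkey k
    linarith
  linarith

theorem aux_surj {E : Type*} [NormedAddCommGroup E] [InnerProductSpace ℝ E]
    [FiniteDimensional ℝ E]
    (u : E → E) (K : NNReal) (hu : LipschitzWith K u) (R : ℝ) (hR0 : 0 < R)
    (hb : ∀ x, ‖x‖ ≤ R → ‖u x‖ ≤ R / 2) : ∃ x, ‖x‖ ≤ R ∧ x + u x = 0 := by
  let χ : E → ℝ := fun x => max 0 (min 1 (2 - 2 / R * ‖x‖))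
  have hχ0 : ∀ x, 0 ≤ χ x := fun x => le_max_left _ _
  have hχ1 : ∀ x, χ x ≤ 1 := fun x => max_le zero_le_one (min_le_left _ _)
  have hχout : ∀ x, R ≤ ‖x‖ → χ x = 0 := by
    intro x hx
    apply max_eq_left
    refine (min_le_right _ _).trans ?_
    have : 2 / R * R ≤ 2 / R * ‖x‖ := by gcongr
    rw [div_mul_cancel₀ _ hR0.ne'] at this
    linarith
  have hχin : ∀ x, ‖x‖ ≤ R / 2 → χ x = 1 := by
    intro x hx
    have : 2 / R * ‖x‖ ≤ 2 / R * (R / 2) := by gcongr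
    have h2 : 2 / R * (R / 2) = 1 := by field_simp
    have h3 : min 1 (2 - 2 / R * ‖x‖) = 1 := min_eq_left (by linarith)
    simp only [χ, h3]; simp
  have hχl : ∀ x y, |χ x - χ y| ≤ 2 / R * ‖x - y‖ := by
    intro x y
    have h1 : |χ x - χ y| ≤ |(2 - 2 / R * ‖x‖) - (2 - 2 / R * ‖y‖)| := by
      have h2 := abs_max_sub_max_le_max 0 (min 1 (2 - 2 / R * ‖x‖)) 0 (min 1 (2 - 2 / R * ‖y‖))
      have h3 := abs_min_sub_min_le_max 1 (2 - 2 / R * ‖x‖) 1 (2 - 2 / R * ‖y‖)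
      rw [sub_self, abs_zero] at h2 h3
      exact h2.trans (max_le (abs_nonneg _) (h3.trans (max_le (abs_nonneg _) le_rfl)))
    refine h1.trans ?_
    have : (2 - 2 / R * ‖x‖) - (2 - 2 / R * ‖y‖) = 2 / R * (‖y‖ - ‖x‖) := by ring
    rw [this, abs_mul, abs_of_pos (by positivity : 0 < 2 / R), norm_sub_rev]
    gcongr
    exact abs_norm_sub_norm_le _ _
  have key : ∀ x y, ‖x‖ ≤ R → ‖χ x • u x - χ y • u y‖ ≤ (1 + K) * ‖x - y‖ := by
    intro x y hx
    have e : χ x • u x - χ y • u y = (χ x - χ y) • u x + χ y • (u x - u y) := by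
      rw [sub_smul, smul_sub]; abel
    rw [e]
    refine (norm_add_le _ _).trans ?_
    rw [norm_smul, norm_smul, Real.norm_eq_abs, Real.norm_of_nonneg (hχ0 y)]
    have h1 : |χ x - χ y| * ‖u x‖ ≤ (2 / R * ‖x - y‖) * (R / 2) :=
      mul_le_mul (hχl x y) (hb x hx) (norm_nonneg _) (by positivity)
    have h2 : (2 / R * ‖x - y‖) * (R / 2) = ‖x - y‖ := by field_simp
    have h3 : χ y * ‖u x - u y‖ ≤ 1 * (K * ‖x - y‖) :=
      mul_le_mul (hχ1 y) (hu.norm_sub_le x y) (norm_nonneg _) zero_le_one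
    linarith
  have hlip : LipschitzWith (1 + K) (fun x => χ x • u x) := by
    apply LipschitzWith.of_dist_le_mul
    intro x y
    rw [dist_eq_norm, dist_eq_norm]
    push_cast
    by_cases hx : ‖x‖ ≤ R
    · exact key x y hx
    by_cases hy : ‖y‖ ≤ R
    · rw [norm_sub_rev, norm_sub_rev x y]; exact key y x hy
    · simp only [hχout x (not_le.1 hx).le, hχout y (not_le.1 hy).le, zero_smul, sub_zero, norm_zero]
      positivity
  obtain ⟨x, hx⟩ := aux_zero _ _ hlip R hR0 (by
    intro x hx
    rw [mem_closedBall_zero_iff, not_le] at hx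
    simp [hχout x hx.le])
  have hxR : ‖x‖ ≤ R := by
    by_contra h
    rw [hχout x (not_le.1 h).le, zero_smul, add_zero] at hx
    rw [hx, norm_zero] at h
    exact h hR0.le
  refine ⟨x, hxR, ?_⟩
  have h1 : ‖x‖ ≤ R / 2 := by
    rw [eq_neg_of_add_eq_zero_left hx, norm_neg, norm_smul, Real.norm_of_nonneg (hχ0 x)]
    have := mul_le_mul (hχ1 x) (hb x hxR) (norm_nonneg _) zero_le_one
    linarith
  simpa [hχin x h1] using hx

/-- Lemma 6.2: if `f` is `C¹` on the ball `B_r ⊆ ℝᴺ`, with `f(0) = 0`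
and `Df(0)` of full rank `d` (i.e. surjective), then there are `δ, s > 0` such that any
Lipschitz map `g : ℝᴺ → ℝᵈ` that is uniformly `δ`-close to `f` on `B_r` satisfies
`g(B_r) ⊇ B_s`. -/
theorem submersion_image_stable {N d : ℕ} (r : ℝ) (hr : 0 < r)
    (f : EuclideanSpace ℝ (Fin N) → EuclideanSpace ℝ (Fin d))
    (hf : ContDiffOn ℝ 1 f (ball (0 : EuclideanSpace ℝ (Fin N)) r))
    (hf0 : f 0 = 0)
    (f' : EuclideanSpace ℝ (Fin N) →L[ℝ] EuclideanSpace ℝ (Fin d))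
    (hdf : HasFDerivAt f f' 0)
    (hrank : Function.Surjective f') :
    ∃ δ > (0 : ℝ), ∃ s > (0 : ℝ),
      ∀ (g : EuclideanSpace ℝ (Fin N) → EuclideanSpace ℝ (Fin d)) (K : NNReal),
        LipschitzWith K g →
        (∀ x ∈ ball (0 : EuclideanSpace ℝ (Fin N)) r, ‖f x - g x‖ ≤ δ) →
        ball (0 : EuclideanSpace ℝ (Fin d)) s ⊆ g '' ball (0 : EuclideanSpace ℝ (Fin N)) r := by
  obtain ⟨L, hL⟩ := f'.exists_rightInverse_of_surjective (LinearMap.range_eq_top.2 hrank)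
  have hL' : ∀ x, f' (L x) = x := fun x => by
    have := congrArg (fun T => T x) hL
    simpa using this
  have hd2 : HasFDerivAt (fun x => f (L x)) (f'.comp L) 0 := by
    apply HasFDerivAt.comp (0 : EuclideanSpace ℝ (Fin d)) _ L.hasFDerivAt
    simpa using hdf
  have hlit := hd2.isLittleO.def (c := 1 / 8) (by norm_num)
  simp only [map_zero, hf0, sub_zero, ContinuousLinearMap.comp_apply, hL'] at hlit
  obtain ⟨R₁, hR₁, hball⟩ := Metric.eventually_nhds_iff_ball.1 hlit
  set R := min (R₁ / 2) (r / (2 * (‖L‖ + 1))) with hRdef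
  have hR0 : 0 < R := lt_min (by positivity) (by positivity)
  have hRR1 : R < R₁ := (min_le_left _ _).trans_lt (by linarith)
  have hLr : ∀ x, ‖x‖ ≤ R → L x ∈ ball (0 : EuclideanSpace ℝ (Fin N)) r := by
    intro x hx
    rw [mem_ball_zero_iff]
    have h1 : R ≤ r / (2 * (‖L‖ + 1)) := min_le_right _ _
    rw [le_div_iff₀ (by positivity)] at h1
    have h2 := L.le_opNorm x
    have h3 : ‖L‖ * ‖x‖ ≤ ‖L‖ * R := by gcongr
    nlinarith [norm_nonneg L]
  refine ⟨R / 8, by positivity, R / 8, by positivity, ?_⟩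
  intro g K hg hgf y hy
  rw [mem_ball_zero_iff] at hy
  have hu : LipschitzWith (K * ‖L‖₊ + 0 + 1) (fun x => g (L x) - y - x) :=
    ((hg.comp L.lipschitz).sub (LipschitzWith.const y)).sub LipschitzWith.id
  obtain ⟨x, hx, hx0⟩ := aux_surj _ _ hu R hR0 (by
    intro x hx
    have h1 := hball x (by rw [mem_ball_zero_iff]; linarith)
    have h2 := hgf _ (hLr x hx)
    have e : g (L x) - y - x = (f (L x) - x) - (f (L x) - g (L x)) - y := by abel
    rw [e]
    have h3 := norm_sub_le ((f (L x) - x) - (f (L x) - g (L x))) y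
    have h4 := norm_sub_le (f (L x) - x) (f (L x) - g (L x))
    linarith)
  refine ⟨L x, hLr x hx, ?_⟩
  have : g (L x) - y = 0 := by rw [← hx0]; abel
  exact sub_eq_zero.1 this
end

section
/- (Duality formula (e: rho-def)) Let α be a measurable space, V : α → [0,∞) measurable, β > 0, and let μ₁, μ₂ be probability measures on α with ∫ V dμ₁ < ∞ and ∫ V dμ₂ < ∞. Then ρ_β(μ₁, μ₂) = sup { ∫ φ dμ₁ - ∫ φ dμ₂ : φ : α → ℝ measurable with |φ(x)| ≤ 1 + βV(x) for all x }. -/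
open MeasureTheory

/-- The weighted total-variation metric `ρ_β(μ₁, μ₂) = ∫ (1 + βV) d|μ₁ - μ₂|`, where
`|μ₁ - μ₂|` is the total variation measure of the signed measure `μ₁ - μ₂`. -/
noncomputable def rhoBeta {α : Type*} [MeasurableSpace α] (β : ℝ) (V : α → ℝ)
    (μ₁ μ₂ : Measure α) [IsFiniteMeasure μ₁] [IsFiniteMeasure μ₂] : ℝ :=
  ∫ x, (1 + β * V x) ∂((μ₁.toSignedMeasure - μ₂.toSignedMeasure).totalVariation)

/-- duality formula (e: rho-def):
`ρ_β(μ₁, μ₂) = sup { ∫ φ dμ₁ - ∫ φ dμ₂ : φ measurable, |φ| ≤ 1 + βV }`. -/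
theorem rhoBeta_duality {α : Type*} [MeasurableSpace α] (β : ℝ) (hβ : 0 < β)
    (V : α → ℝ) (hVmeas : Measurable V) (hVpos : ∀ x, 0 ≤ V x)
    (μ₁ μ₂ : Measure α) [IsProbabilityMeasure μ₁] [IsProbabilityMeasure μ₂]
    (h₁ : Integrable V μ₁) (h₂ : Integrable V μ₂) :
    rhoBeta β V μ₁ μ₂ =
      sSup { r : ℝ | ∃ φ : α → ℝ, Measurable φ ∧ (∀ x, |φ x| ≤ 1 + β * V x) ∧
        r = (∫ x, φ x ∂μ₁) - ∫ x, φ x ∂μ₂ } := by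
  set s := μ₁.toSignedMeasure - μ₂.toSignedMeasure with hs
  set p := s.toJordanDecomposition.posPart with hp
  set n := s.toJordanDecomposition.negPart with hn
  have hsing : p.MutuallySingular n := s.toJordanDecomposition.mutuallySingular
  have hbal : μ₁ + n = μ₂ + p := by
    ext A hA
    have h := s.apply_eq_posPart_real_sub_negPart_real hA
    have h' : s A = μ₁.real A - μ₂.real A := by
      rw [hs, VectorMeasure.sub_apply, Measure.toSignedMeasure_apply_measurable hA,
        Measure.toSignedMeasure_apply_measurable hA]
    rw [← ENNReal.toReal_eq_toReal_iff' (measure_ne_top _ _) (measure_ne_top _ _)]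
    change (μ₁ + n).real A = (μ₂ + p).real A
    rw [measureReal_add_apply, measureReal_add_apply]
    rw [h'] at h
    change _ = p.real A - n.real A at h
    linarith
  obtain ⟨S, hS, hpS, hnS⟩ := hsing
  have hple : p ≤ μ₁ := by
    refine Measure.le_iff.2 fun A hA => ?_
    have e := congrArg (fun m : Measure α => m (A ∩ Sᶜ)) hbal
    simp only [Measure.add_apply] at e
    rw [measure_mono_null Set.inter_subset_right hnS, add_zero] at e
    calc p A ≤ p (A ∩ S) + p (A ∩ Sᶜ) := by
          rw [← Set.diff_eq, measure_inter_add_diff A hS]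
      _ = p (A ∩ Sᶜ) := by rw [measure_mono_null Set.inter_subset_right hpS, zero_add]
      _ ≤ μ₁ (A ∩ Sᶜ) := by rw [e]; exact le_add_self
      _ ≤ μ₁ A := measure_mono Set.inter_subset_left
  have hnle : n ≤ μ₂ := by
    refine Measure.le_iff.2 fun A hA => ?_
    have e := congrArg (fun m : Measure α => m (A ∩ S)) hbal
    simp only [Measure.add_apply] at e
    rw [measure_mono_null Set.inter_subset_right hpS, add_zero] at e
    calc n A ≤ n (A ∩ S) + n (A ∩ Sᶜ) := by
          rw [← Set.diff_eq, measure_inter_add_diff A hS]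
      _ = n (A ∩ S) := by rw [measure_mono_null Set.inter_subset_right hnS, add_zero]
      _ ≤ μ₂ (A ∩ S) := by rw [← e]; exact le_add_self
      _ ≤ μ₂ A := measure_mono Set.inter_subset_left
  have hw0 : ∀ x, 0 ≤ 1 + β * V x := fun x => by have := mul_nonneg hβ.le (hVpos x); linarith
  have hw₁ : Integrable (fun x => 1 + β * V x) μ₁ := (integrable_const 1).add (h₁.const_mul β)
  have hw₂ : Integrable (fun x => 1 + β * V x) μ₂ := (integrable_const 1).add (h₂.const_mul β)
  have hwp := hw₁.mono_measure hple
  have hwn := hw₂.mono_measure hnle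
  have hrho : rhoBeta β V μ₁ μ₂ = (∫ x, (1 + β * V x) ∂p) + ∫ x, (1 + β * V x) ∂n := by
    rw [← integral_add_measure hwp hwn]; rfl
  have key : ∀ φ : α → ℝ, Measurable φ → (∀ x, |φ x| ≤ 1 + β * V x) →
      Integrable φ p ∧ Integrable φ n ∧
      (∫ x, φ x ∂μ₁) - ∫ x, φ x ∂μ₂ = (∫ x, φ x ∂p) - ∫ x, φ x ∂n := by
    intro φ hφ hb
    have g : ∀ m : Measure α, Integrable (fun x => 1 + β * V x) m → Integrable φ m :=
      fun m hm => hm.mono' hφ.aestronglyMeasurable (Filter.Eventually.of_forall hb)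
    refine ⟨g p hwp, g n hwn, ?_⟩
    have e : ∫ x, φ x ∂(μ₁ + n) = ∫ x, φ x ∂(μ₂ + p) := by rw [hbal]
    rw [integral_add_measure (g _ hw₁) (g _ hwn), integral_add_measure (g _ hw₂) (g _ hwp)] at e
    linarith
  symm
  apply IsGreatest.csSup_eq
  constructor
  · classical
    let φ : α → ℝ := fun x => if x ∈ S then -(1 + β * V x) else 1 + β * V x
    have hw : Measurable fun x => 1 + β * V x := (hVmeas.const_mul β).const_add 1
    have hφ : Measurable φ := Measurable.ite hS hw.neg hw
    have hb : ∀ x, |φ x| ≤ 1 + β * V x := by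
      intro x
      by_cases hx : x ∈ S <;> simp only [φ, hx, if_true, if_false, abs_neg, abs_of_nonneg (hw0 x)] <;>
        exact le_rfl
    refine ⟨φ, hφ, hb, ?_⟩
    rw [(key φ hφ hb).2.2, hrho]
    have e1 : ∫ x, φ x ∂p = ∫ x, (1 + β * V x) ∂p := by
      apply integral_congr_ae
      filter_upwards [measure_eq_zero_iff_ae_notMem.1 hpS] with x hx
      simp [φ, hx]
    have e2 : ∫ x, φ x ∂n = - ∫ x, (1 + β * V x) ∂n := by
      rw [← integral_neg]
      apply integral_congr_ae
      filter_upwards [measure_eq_zero_iff_ae_notMem.1 hnS] with x hx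
      have hx' : x ∈ S := by simpa using hx
      simp [φ, hx']
    rw [e1, e2]; ring
  · rintro r ⟨φ, hφ, hb, rfl⟩
    obtain ⟨ip, iN, e⟩ := key φ hφ hb
    rw [e, hrho]
    have a1 := integral_mono ip hwp (fun x => (abs_le.1 (hb x)).2)
    have a2 := integral_mono hwn.neg iN (fun x => (abs_le.1 (hb x)).1)
    simp only [Pi.neg_apply] at a2
    rw [integral_neg] at a2
    linarith
end

section
/- (Anti-concentration of the sine shear displacement; Case 1 of Proposition 9.1) There exists a constant C > 0 such that for every A ≥ 1 and all real numbers a, b with 0 < |a - b| ≤ 1/2, the Lebesgue measure of the set { ζ ∈ [0,1] : |A sin(2π(a - ζ)) - A sin(2π(b - ζ))| < |a - b| } is at most C/A. -/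
open MeasureTheory

lemma aux_sin {x : ℝ} (hx : |x| ≤ 1 / 2) : 2 * |x| ≤ |Real.sin (Real.pi * x)| := by
  have hp := Real.pi_pos
  have h := Real.mul_abs_le_abs_sin (x := Real.pi * x) (by
    rw [abs_mul, abs_of_pos hp]; nlinarith)
  rw [abs_mul, abs_of_pos hp] at h
  calc 2 * |x| = 2 / Real.pi * (Real.pi * |x|) := by field_simp
    _ ≤ _ := h

lemma aux_round (u : ℝ) : 2 * |u - round u| ≤ |Real.sin (Real.pi * u)| := by
  have h := aux_sin (abs_sub_round u)
  have e : Real.pi * (u - round u) = Real.pi * u - (round u : ℤ) * Real.pi := by ring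
  rw [e, Real.sin_sub_int_mul_pi, abs_mul, abs_zpow] at h
  simpa using h

/-- anti-concentration of the sine shear displacement; Case 1 of
Proposition 9.1: there is `C > 0` such that for all `A ≥ 1` and `0 < |a-b| ≤ 1/2`,
the set of shifts `ζ ∈ [0,1]` for which
`|A sin(2π(a-ζ)) - A sin(2π(b-ζ))| < |a-b|` has Lebesgue measure at most `C/A`. -/
theorem sine_shear_anticoncentration :
    ∃ C > (0 : ℝ), ∀ A : ℝ, 1 ≤ A → ∀ a b : ℝ, 0 < |a - b| → |a - b| ≤ 1 / 2 →
      volume {ζ ∈ Set.Icc (0 : ℝ) 1 |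
          |A * Real.sin (2 * Real.pi * (a - ζ)) - A * Real.sin (2 * Real.pi * (b - ζ))|
            < |a - b|}
        ≤ ENNReal.ofReal (C / A) := by
  refine ⟨1, one_pos, ?_⟩
  intro A hA a b h0 h1
  have hA0 : 0 < A := by linarith
  set s : ℝ := a + b - 1 / 2 with hs
  have hsub : {ζ ∈ Set.Icc (0 : ℝ) 1 |
      |A * Real.sin (2 * Real.pi * (a - ζ)) - A * Real.sin (2 * Real.pi * (b - ζ))|
        < |a - b|} ⊆ ⋃ n ∈ Finset.Icc (round s - 3) (round s + 3),
          Metric.ball ((s - (n : ℤ)) / 2) (1 / (16 * A)) := by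
    rintro ζ ⟨⟨hz0, hz1⟩, h⟩
    have e : A * Real.sin (2 * Real.pi * (a - ζ)) - A * Real.sin (2 * Real.pi * (b - ζ))
        = -(2 * A * Real.sin (Real.pi * (a - b)) * Real.sin (Real.pi * (s - 2 * ζ))) := by
      rw [← mul_sub, Real.sin_sub_sin]
      have e1 : (2 * Real.pi * (a - ζ) - 2 * Real.pi * (b - ζ)) / 2 = Real.pi * (a - b) := by
        ring
      have e2 : (2 * Real.pi * (a - ζ) + 2 * Real.pi * (b - ζ)) / 2
          = Real.pi * (s - 2 * ζ) + Real.pi / 2 := by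
        rw [hs]; ring
      rw [e1, e2, Real.cos_add_pi_div_two]; ring
    rw [e, abs_neg, abs_mul, abs_mul, abs_of_pos (by linarith : 0 < 2 * A)] at h
    have k1 := aux_sin h1
    have k2 := aux_round (s - 2 * ζ)
    have hr := abs_sub_round (s - 2 * ζ)
    have hr2 := abs_sub_round s
    set n := round (s - 2 * ζ) with hn
    have k3 : 2 * A * (2 * |a - b|) * (2 * |s - 2 * ζ - n|) < |a - b| :=
      lt_of_le_of_lt (by gcongr) h
    have k4 : 8 * A * |s - 2 * ζ - n| < 1 := by
      by_contra hc
      push Not at hc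
      nlinarith
    simp only [Set.mem_iUnion, Finset.mem_Icc, Metric.mem_ball, Real.dist_eq]
    refine ⟨n, ⟨?_, ?_⟩, ?_⟩
    · rw [abs_le] at hr hr2
      have : ((round s - 3 : ℤ) : ℝ) ≤ n := by push_cast; linarith
      exact_mod_cast this
    · rw [abs_le] at hr hr2
      have : (n : ℝ) ≤ ((round s + 3 : ℤ) : ℝ) := by push_cast; linarith
      exact_mod_cast this
    · have e3 : ζ - (s - n) / 2 = -((s - 2 * ζ - n) / 2) := by ring
      rw [e3, abs_neg, abs_div, abs_two, lt_div_iff₀ (by positivity)]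
      linarith
  refine (measure_mono hsub).trans ((measure_biUnion_finset_le _ _).trans ?_)
  simp only [Real.volume_ball, Finset.sum_const, Int.card_Icc]
  have e4 : (round s + 3 + 1 - (round s - 3)).toNat = 7 := by
    have : round s + 3 + 1 - (round s - 3) = 7 := by ring
    rw [this]; rfl
  rw [e4, ← ENNReal.ofReal_nsmul]
  apply ENNReal.ofReal_le_ofReal
  have : 0 < 1 / A := by positivity
  have e5 : 7 • (2 * (1 / (16 * A))) = 7 / 8 * (1 / A) := by
    simp only [nsmul_eq_mul]; field_simp; norm_num
  rw [e5]; linarith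
end

section
/- (Core drift inequality of Proposition 9.1: an explicit Lyapunov function for Pierrehumbert flows) For A > 0 and ζ, η ∈ ℝ define S_{A,ζ}, T_{A,η} : ℝ² → ℝ² by S_{A,ζ}(x₁,x₂) = (x₁ + A sin(2π(x₂ - ζ)), x₂) and T_{A,η}(x₁,x₂) = (x₁, x₂ + A sin(2π(x₁ - η))), and set Φ_{A,ζ,η} = T_{A,η} ∘ S_{A,ζ}. Then there exist p ∈ (0,1), c > 0, A₀ ≥ 1, and β ∈ (0,1) such that for every A ≥ A₀ and all x, y ∈ ℝ² with 0 < |x - y|_∞ ≤ c A^{-2}, ∫₀¹ ∫₀¹ |Φ_{A,ζ,η}(x) - Φ_{A,ζ,η}(y)|_∞^{-p} dζ dη ≤ β |x - y|_∞^{-p}. -/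
/-- The horizontal sinusoidal shear `S_{A,ζ}(x₁,x₂) = (x₁ + A sin(2π(x₂-ζ)), x₂)`. -/
noncomputable def shearS (A ζ : ℝ) (x : ℝ × ℝ) : ℝ × ℝ :=
  (x.1 + A * Real.sin (2 * Real.pi * (x.2 - ζ)), x.2)

/-- The vertical sinusoidal shear `T_{A,η}(x₁,x₂) = (x₁, x₂ + A sin(2π(x₁-η)))`. -/
noncomputable def shearT (A η : ℝ) (x : ℝ × ℝ) : ℝ × ℝ :=
  (x.1, x.2 + A * Real.sin (2 * Real.pi * (x.1 - η)))

open MeasureTheory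

lemma ph_anti {a b : ENNReal} (h : a ≤ b) {q : ℝ} (hq : 0 ≤ q) : b ^ (-q) ≤ a ^ (-q) := by
  rw [ENNReal.rpow_neg, ENNReal.rpow_neg]
  exact ENNReal.inv_le_inv.2 (ENNReal.rpow_le_rpow h hq)

lemma ph_sin {t : ℝ} (h : |t| ≤ 1 / 2) : 2 * |t| ≤ |Real.sin (Real.pi * t)| := by
  have hp := Real.pi_pos
  have h1 : |Real.pi * t| ≤ Real.pi / 2 := by
    rw [abs_mul, abs_of_pos hp]; nlinarith
  have h2 := Real.mul_abs_le_abs_sin h1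
  rw [abs_mul, abs_of_pos hp] at h2
  have : 2 / Real.pi * (Real.pi * |t|) = 2 * |t| := by field_simp
  linarith

lemma ph_K : ∃ K : ℝ, 1 ≤ K ∧
    ∫⁻ t in Set.Ioc (0:ℝ) 1, (ENNReal.ofReal |Real.sin (Real.pi * t)|) ^ (-(1/2:ℝ))
      ≤ ENNReal.ofReal K := by
  have i1 : IntervalIntegrable (fun t : ℝ => t ^ (-(1/2:ℝ))) volume 0 1 :=
    intervalIntegral.intervalIntegrable_rpow' (by norm_num)
  have i2 : IntervalIntegrable (fun t : ℝ => (1 - t) ^ (-(1/2:ℝ))) volume 0 1 := by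
    have := (i1.comp_sub_left 1).symm
    simpa using this
  have i3 := (i1.add i2)
  rw [intervalIntegrable_iff_integrableOn_Ioo_of_le zero_le_one] at i3
  have fin := i3.2
  rw [HasFiniteIntegral] at fin
  rw [← restrict_Ioo_eq_restrict_Ioc]
  refine ⟨max 1 (∫⁻ t in Set.Ioo (0:ℝ) 1, ‖t ^ (-(1/2:ℝ)) + (1 - t) ^ (-(1/2:ℝ))‖ₑ).toReal,
    le_max_left _ _, ?_⟩
  refine le_trans ?_ (ENNReal.ofReal_le_ofReal (le_max_right _ _))
  rw [ENNReal.ofReal_toReal fin.ne]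
  refine setLIntegral_mono' measurableSet_Ioo fun t ht => ?_
  have h1 : 0 < t := ht.1
  have h2 : 0 < 1 - t := by linarith [ht.2]
  have p1 := Real.rpow_nonneg h1.le (-(1/2:ℝ))
  have p2 := Real.rpow_nonneg h2.le (-(1/2:ℝ))
  rw [Real.enorm_of_nonneg (by positivity)]
  rcases le_total t (1/2) with h | h
  · have := ph_sin (t := t) (by rw [abs_of_pos h1]; exact h)
    rw [abs_of_pos h1] at this
    refine (ph_anti (a := ENNReal.ofReal t) (ENNReal.ofReal_le_ofReal (by linarith)) (by norm_num)).trans ?_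
    rw [ENNReal.ofReal_rpow_of_pos h1]
    exact ENNReal.ofReal_le_ofReal (by linarith)
  · have := ph_sin (t := 1 - t) (by rw [abs_of_pos h2]; linarith)
    rw [abs_of_pos h2, mul_sub Real.pi, mul_one, Real.sin_pi_sub] at this
    refine (ph_anti (a := ENNReal.ofReal (1 - t)) (ENNReal.ofReal_le_ofReal (by linarith)) (by norm_num)).trans ?_
    rw [ENNReal.ofReal_rpow_of_pos h2]
    exact ENNReal.ofReal_le_ofReal (by linarith)

lemma ph_shift (f : ℝ → ENNReal) (hf : Function.Periodic f 1) (α : ℝ) :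
    ∫⁻ t in Set.Ioc (0:ℝ) 1, f (t + α) = ∫⁻ t in Set.Ioc (0:ℝ) 1, f t := by
  have h1 := (measurePreserving_add_right (volume : Measure ℝ) α).setLIntegral_comp_preimage_emb
    (measurableEmbedding_addRight α) f (Set.Ioc α (α + 1))
  have h2 : (fun x => x + α) ⁻¹' (Set.Ioc α (α + 1)) = Set.Ioc 0 1 := by
    ext x; simp [add_comm]
  rw [h2] at h1
  rw [h1]
  have h3 := (isAddFundamentalDomain_Ioc (T := 1) one_pos α).setLIntegral_eq
    (isAddFundamentalDomain_Ioc (T := 1) one_pos 0) f hf.map_vadd_zmultiples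
  simpa using h3

lemma ph_low (u v : ℝ) : ∃ α β : ℝ, ∀ t : ℝ,
    max |u| |v| * (min |Real.sin (Real.pi * (t + α))| |Real.sin (Real.pi * (t + β))|) ^ 2
      ≤ |u + v * Real.cos (2 * Real.pi * t)| := by
  rcases le_or_gt |u| |v| with h | h
  · rw [max_eq_right h]
    by_cases hv : v = 0
    · exact ⟨0, 0, fun t => by simp [hv]⟩
    have hq : |-(u / v)| ≤ 1 := by
      rw [abs_neg, abs_div]; exact div_le_one_of_le₀ h (abs_nonneg _)
    rw [abs_le] at hq
    refine ⟨Real.arccos (-(u/v)) / (2 * Real.pi), -(Real.arccos (-(u/v)) / (2 * Real.pi)),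
      fun t => ?_⟩
    have hc := Real.cos_arccos hq.1 hq.2
    set φ := Real.arccos (-(u/v))
    have hu : u = - v * Real.cos φ := by rw [hc]; field_simp
    have e : u + v * Real.cos (2 * Real.pi * t) =
        v * (-2 * Real.sin (Real.pi * (t + φ / (2 * Real.pi))) * Real.sin (Real.pi * (t + -(φ / (2 * Real.pi))))) := by
      have := Real.cos_sub_cos (2 * Real.pi * t) φ
      have hp := Real.pi_ne_zero
      rw [show Real.pi * (t + φ / (2 * Real.pi)) = (2 * Real.pi * t + φ) / 2 by field_simp,
        show Real.pi * (t + -(φ / (2 * Real.pi))) = (2 * Real.pi * t - φ) / 2 by field_simp; ring,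
        ← this, hu]; ring
    rw [e, abs_mul, abs_mul, abs_mul]
    refine mul_le_mul_of_nonneg_left ?_ (abs_nonneg _)
    set s := |Real.sin (Real.pi * (t + φ / (2 * Real.pi)))|
    set s' := |Real.sin (Real.pi * (t + -(φ / (2 * Real.pi))))|
    have hs : 0 ≤ s := abs_nonneg _
    have hs' : 0 ≤ s' := abs_nonneg _
    have hm : 0 ≤ min s s' := le_min hs hs'
    have := mul_le_mul (min_le_left s s') (min_le_right s s') hm hs
    norm_num
    nlinarith
  · rw [max_eq_left h.le]
    refine ⟨0, 1/2, fun t => ?_⟩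
    have c1 : Real.cos (2 * Real.pi * t) = 1 - 2 * Real.sin (Real.pi * (t + 0)) ^ 2 := by
      rw [add_zero, mul_assoc, Real.cos_two_mul, Real.cos_sq']; ring
    have c2 : Real.cos (2 * Real.pi * t) = 2 * Real.sin (Real.pi * (t + 1/2)) ^ 2 - 1 := by
      rw [mul_add, ← mul_div_assoc, mul_one, Real.sin_add_pi_div_two, mul_assoc, Real.cos_two_mul]
    have hs1 := sq_abs (Real.sin (Real.pi * (t + 0)))
    have hs2 := sq_abs (Real.sin (Real.pi * (t + 1/2)))
    set s := |Real.sin (Real.pi * (t + 0))|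
    set s' := |Real.sin (Real.pi * (t + 1/2))|
    have hs : 0 ≤ s := abs_nonneg _
    have hs' : 0 ≤ s' := abs_nonneg _
    have hm : 0 ≤ min s s' := le_min hs hs'
    have m1 : min s s' ^ 2 ≤ s ^ 2 := pow_le_pow_left₀ hm (min_le_left _ _) 2
    have m2 : min s s' ^ 2 ≤ s' ^ 2 := pow_le_pow_left₀ hm (min_le_right _ _) 2
    have k : |Real.cos (2 * Real.pi * t)| ≤ 1 - 2 * min s s' ^ 2 := by
      rw [abs_le]; constructor <;> linarith
    have t1 : |u| - |v * Real.cos (2 * Real.pi * t)| ≤ |u + v * Real.cos (2 * Real.pi * t)| := by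
      have := abs_sub_abs_le_abs_sub u (-(v * Real.cos (2 * Real.pi * t)))
      rwa [abs_neg, sub_neg_eq_add] at this
    rw [abs_mul] at t1
    have t2 : |v| * |Real.cos (2 * Real.pi * t)| ≤ |u| * (1 - 2 * min s s' ^ 2) :=
      mul_le_mul h.le k (abs_nonneg _) (abs_nonneg _)
    have t3 : 0 ≤ |u| * min s s' ^ 2 := by positivity
    linarith

lemma ph_int {K : ℝ}
    (hK : ∫⁻ t in Set.Ioc (0:ℝ) 1, (ENNReal.ofReal |Real.sin (Real.pi * t)|) ^ (-(1/2:ℝ))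
      ≤ ENNReal.ofReal K) (u v m : ℝ) :
    ∫⁻ t in Set.Ioc (0:ℝ) 1,
      (ENNReal.ofReal |u + v * Real.cos (2 * Real.pi * (m - t))|) ^ (-(1/4:ℝ))
      ≤ ENNReal.ofReal (2 * K) * (ENNReal.ofReal (max |u| |v|)) ^ (-(1/4:ℝ)) := by
  obtain ⟨α, β, hab⟩ := ph_low u v
  set M := max |u| |v| with hM
  rcases (show 0 ≤ M by positivity).eq_or_lt with h0 | hpos
  · rw [← h0]
    rcases le_or_gt K 0 with hK0 | hK0
    · exfalso
      rw [ENNReal.ofReal_of_nonpos hK0] at hK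
      have : (∫⁻ t in Set.Ioc (0:ℝ) 1, (1:ENNReal)) ≤ 0 := by
        refine le_trans (lintegral_mono fun t => ?_) hK
        have := ph_anti (a := ENNReal.ofReal |Real.sin (Real.pi * t)|) (b := 1)
          (by simpa using Real.abs_sin_le_one _) (q := 1/2) (by norm_num)
        simpa using this
      simp at this
    · rw [ENNReal.ofReal_zero, ENNReal.zero_rpow_of_neg (by norm_num), ENNReal.mul_top]
      · exact le_top
      · simpa using hK0
  set g : ℝ → ENNReal := fun t => (ENNReal.ofReal |Real.sin (Real.pi * t)|) ^ (-(1/2:ℝ)) with hg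
  have gper : Function.Periodic g 1 := by
    intro t
    simp only [hg]
    rw [mul_add, mul_one, Real.sin_add_pi, abs_neg]
  have gm : Measurable g := by
    simp only [hg]; fun_prop
  have key : ∀ s : ℝ, (ENNReal.ofReal |u + v * Real.cos (2 * Real.pi * s)|) ^ (-(1/4:ℝ)) ≤
      (ENNReal.ofReal M) ^ (-(1/4:ℝ)) * (g (s + α) + g (s + β)) := by
    intro s
    refine (ph_anti (ENNReal.ofReal_le_ofReal (hab s)) (by norm_num)).trans ?_
    rw [ENNReal.ofReal_mul hpos.le, ENNReal.mul_rpow_of_ne_top ENNReal.ofReal_ne_top ENNReal.ofReal_ne_top]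
    gcongr
    have sq : ∀ w : ℝ, 0 ≤ w → ENNReal.ofReal (w ^ 2) ^ (-(1/4:ℝ)) = ENNReal.ofReal w ^ (-(1/2:ℝ)) := by
      intro w hw
      rw [ENNReal.ofReal_pow hw, ← ENNReal.rpow_natCast, ← ENNReal.rpow_mul]
      norm_num
    rw [sq _ (by positivity)]
    rcases min_choice |Real.sin (Real.pi * (s + α))| |Real.sin (Real.pi * (s + β))| with h | h <;> rw [h]
    · exact le_self_add
    · exact le_add_self
  have even : ∀ t γ : ℝ, g (m - t + γ) = g (t + (- m - γ)) := by
    intro t γ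
    simp only [hg]
    rw [show Real.pi * (m - t + γ) = -(Real.pi * (t + (-m - γ))) by ring, Real.sin_neg, abs_neg]
  calc _ ≤ ∫⁻ t in Set.Ioc (0:ℝ) 1, (ENNReal.ofReal M) ^ (-(1/4:ℝ)) *
        (g (t + (-m - α)) + g (t + (-m - β))) := by
        refine lintegral_mono fun t => ?_
        have := key (m - t)
        rwa [even, even] at this
    _ = (ENNReal.ofReal M) ^ (-(1/4:ℝ)) * ((∫⁻ t in Set.Ioc (0:ℝ) 1, g t) + ∫⁻ t in Set.Ioc (0:ℝ) 1, g t) := by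
        rw [lintegral_const_mul _ (by fun_prop), lintegral_add_left (by fun_prop), ph_shift g gper, ph_shift g gper]
    _ ≤ (ENNReal.ofReal M) ^ (-(1/4:ℝ)) * (ENNReal.ofReal K + ENNReal.ofReal K) := by
        gcongr
    _ = _ := by
        rw [mul_comm, ← two_mul, ENNReal.ofReal_mul zero_le_two]; simp

/-- The Pierrehumbert two-step map `Φ_{A,ζ,η} = T_{A,η} ∘ S_{A,ζ}`. -/
noncomputable def pierrehumbertMap (A ζ η : ℝ) (x : ℝ × ℝ) : ℝ × ℝ :=
  shearT A η (shearS A ζ x)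

/-- core drift inequality of Proposition 9.1: there exist
`p ∈ (0,1)`, `c > 0`, `A₀ ≥ 1` and `β ∈ (0,1)` such that for every amplitude `A ≥ A₀`
and all `x ≠ y` with `|x-y|_∞ ≤ c A⁻²`, averaging over independent uniform shifts
`ζ, η ∈ [0,1]` gives `E |Φ(x) - Φ(y)|_∞^{-p} ≤ β |x-y|_∞^{-p}`; i.e.
`V(x,y) = |x-y|_∞^{-p}` is a Lyapunov function for the two-point chain near the
diagonal. (The norm of `ℝ × ℝ` is the `ℓ^∞` norm.) -/
theorem pierrehumbert_drift :
    ∃ p ∈ Set.Ioo (0 : ℝ) 1, ∃ c > (0 : ℝ), ∃ A₀ : ℝ, 1 ≤ A₀ ∧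
      ∃ β ∈ Set.Ioo (0 : ℝ) 1,
        ∀ A : ℝ, A₀ ≤ A → ∀ x y : ℝ × ℝ, 0 < ‖x - y‖ → ‖x - y‖ ≤ c / A ^ 2 →
          (∫ ζ in (0 : ℝ)..1, ∫ η in (0 : ℝ)..1,
              ‖pierrehumbertMap A ζ η x - pierrehumbertMap A ζ η y‖ ^ (-p))
            ≤ β * ‖x - y‖ ^ (-p) := by
  obtain ⟨K, hK1, hK⟩ := ph_K
  have hL1 : 1 ≤ 8 * K ^ 2 := by nlinarith
  refine ⟨1/4, by norm_num, 1/18, by norm_num, (8 * K ^ 2) ^ 4, one_le_pow₀ hL1, 1/2,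
    by norm_num, ?_⟩
  intro A hA x y hr hrc
  have hA1 : 1 ≤ A := (one_le_pow₀ hL1).trans hA
  have hA0 : 0 < A := by linarith
  set r := ‖x - y‖ with hrdef
  have hrA : A * r ≤ 1 / 18 := by
    rw [le_div_iff₀ (by positivity)] at hrc
    nlinarith [mul_nonneg hr.le hA0.le]
  have hr18 : r ≤ 1 / 18 := by nlinarith
  set d1 := x.1 - y.1 with hd1
  set d2 := x.2 - y.2 with hd2
  have hrmax : r = max |d1| |d2| := by
    rw [hrdef, Prod.norm_def]; simp [hd1, hd2, Real.norm_eq_abs]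
  have hd1r : |d1| ≤ r := by rw [hrmax]; exact le_max_left _ _
  have hd2r : |d2| ≤ r := by rw [hrmax]; exact le_max_right _ _
  have hsd : ∀ a b m : ℝ, A * Real.sin (2 * Real.pi * (a - m)) - A * Real.sin (2 * Real.pi * (b - m))
      = 2 * A * Real.sin (Real.pi * (a - b)) * Real.cos (2 * Real.pi * ((a + b) / 2 - m)) := by
    intro a b m
    rw [← mul_sub, Real.sin_sub_sin,
      show (2 * Real.pi * (a - m) - 2 * Real.pi * (b - m)) / 2 = Real.pi * (a - b) by ring,
      show (2 * Real.pi * (a - m) + 2 * Real.pi * (b - m)) / 2 = 2 * Real.pi * ((a + b) / 2 - m) by ring]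
    ring
  set v := 2 * A * Real.sin (Real.pi * d2) with hv
  set a : ℝ → ℝ := fun ζ => d1 + v * Real.cos (2 * Real.pi * ((x.2 + y.2) / 2 - ζ)) with ha
  have hvlow : |d2| ≤ |v| := by
    have := ph_sin (t := d2) (by linarith)
    rw [hv, abs_mul, abs_of_pos (by positivity : 0 < 2 * A)]
    nlinarith [abs_nonneg d2]
  have hvup : |v| ≤ 8 * (A * r) := by
    rw [hv, abs_mul, abs_of_pos (by positivity : 0 < 2 * A)]
    have h1 : |Real.sin (Real.pi * d2)| ≤ |Real.pi * d2| := Real.abs_sin_le_abs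
    rw [abs_mul, abs_of_pos Real.pi_pos] at h1
    have h2 : Real.pi * |d2| ≤ 4 * r := mul_le_mul Real.pi_le_four hd2r (abs_nonneg _) (by norm_num)
    nlinarith
  have haup : ∀ ζ, |a ζ| ≤ 1 / 2 := by
    intro ζ
    have h1 := abs_add_le d1 (v * Real.cos (2 * Real.pi * ((x.2 + y.2) / 2 - ζ)))
    rw [abs_mul] at h1
    have h2 := mul_le_of_le_one_right (abs_nonneg v)
      (Real.abs_cos_le_one (2 * Real.pi * ((x.2 + y.2) / 2 - ζ)))
    simp only [ha]
    linarith
  have hS : ∀ ζ, (shearS A ζ x).1 - (shearS A ζ y).1 = a ζ := by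
    intro ζ
    have := hsd x.2 y.2 ζ
    simp only [shearS, ha, hv, hd1, hd2]
    linarith
  have hT : ∀ ζ η, |d2 + 2 * A * Real.sin (Real.pi * a ζ) *
      Real.cos (2 * Real.pi * (((shearS A ζ x).1 + (shearS A ζ y).1) / 2 - η))|
      ≤ ‖pierrehumbertMap A ζ η x - pierrehumbertMap A ζ η y‖ := by
    intro ζ η
    refine le_trans (le_of_eq ?_) (norm_snd_le _)
    have h1 := hsd (shearS A ζ x).1 (shearS A ζ y).1 η
    rw [hS] at h1
    rw [Real.norm_eq_abs, ← h1, Prod.snd_sub]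
    have e1 : (shearS A ζ x).2 = x.2 := rfl
    have e2 : (shearS A ζ y).2 = y.2 := rfl
    simp only [pierrehumbertMap, shearT, e1, e2, hd2]
    congr 1; ring
  have enp : ∀ t : ℝ, 0 ≤ t → ‖t ^ (-(1/4:ℝ))‖ₑ ≤ ENNReal.ofReal t ^ (-(1/4:ℝ)) := by
    intro t ht
    rcases ht.eq_or_lt with h | h
    · rw [← h, Real.zero_rpow (by norm_num)]; simp
    · rw [ENNReal.ofReal_rpow_of_pos h, Real.enorm_of_nonneg (Real.rpow_nonneg ht _)]
  have inner : ∀ ζ, ‖∫ η in (0 : ℝ)..1,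
      ‖pierrehumbertMap A ζ η x - pierrehumbertMap A ζ η y‖ ^ (-(1/4:ℝ))‖ₑ ≤
      ENNReal.ofReal (2 * K) * ENNReal.ofReal A ^ (-(1/4:ℝ)) * ENNReal.ofReal |a ζ| ^ (-(1/4:ℝ)) := by
    intro ζ
    rw [intervalIntegral.integral_of_le zero_le_one]
    refine (enorm_integral_le_lintegral_enorm _).trans ?_
    refine (lintegral_mono fun η => (enp _ (norm_nonneg _)).trans
      (ph_anti (ENNReal.ofReal_le_ofReal (hT ζ η)) (by norm_num))).trans ?_
    refine (ph_int hK _ _ _).trans ?_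
    rw [mul_assoc (ENNReal.ofReal (2 * K)), ← ENNReal.mul_rpow_of_ne_top ENNReal.ofReal_ne_top ENNReal.ofReal_ne_top,
      ← ENNReal.ofReal_mul hA0.le]
    refine mul_le_mul_right (ph_anti (ENNReal.ofReal_le_ofReal (le_trans ?_ (le_max_right _ _))) (by norm_num)) _
    have := ph_sin (haup ζ)
    rw [abs_mul, abs_of_pos (by positivity : 0 < 2 * A)]
    nlinarith [abs_nonneg (a ζ)]
  have outer : ‖∫ ζ in (0 : ℝ)..1, ∫ η in (0 : ℝ)..1,
      ‖pierrehumbertMap A ζ η x - pierrehumbertMap A ζ η y‖ ^ (-(1/4:ℝ))‖ₑ ≤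
      ENNReal.ofReal (2 * K) * ENNReal.ofReal A ^ (-(1/4:ℝ)) *
        (ENNReal.ofReal (2 * K) * ENNReal.ofReal r ^ (-(1/4:ℝ))) := by
    rw [intervalIntegral.integral_of_le zero_le_one]
    refine (enorm_integral_le_lintegral_enorm _).trans ?_
    refine (lintegral_mono inner).trans ?_
    rw [lintegral_const_mul' _ _ (by
      rw [ENNReal.ofReal_rpow_of_pos hA0]
      exact ENNReal.mul_ne_top ENNReal.ofReal_ne_top ENNReal.ofReal_ne_top)]
    gcongr
    refine (ph_int hK _ _ _).trans ?_
    refine mul_le_mul_right (ph_anti (ENNReal.ofReal_le_ofReal ?_) (by norm_num)) _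
    rw [hrmax]
    exact max_le_max le_rfl hvlow
  have hAq : A ^ (-(1/4:ℝ)) ≤ (8 * K ^ 2)⁻¹ := by
    have h1 : A ^ (-(1/4:ℝ)) ≤ ((8 * K ^ 2) ^ 4) ^ (-(1/4:ℝ)) :=
      Real.rpow_le_rpow_of_nonpos (by positivity) hA (by norm_num)
    refine h1.trans (le_of_eq ?_)
    rw [← Real.rpow_natCast, ← Real.rpow_mul (by positivity), ← Real.rpow_neg_one]
    norm_num
  have hrq := Real.rpow_nonneg hr.le (-(1/4:ℝ))
  have hAq0 := Real.rpow_nonneg hA0.le (-(1/4:ℝ))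
  rw [ENNReal.ofReal_rpow_of_pos hA0, ENNReal.ofReal_rpow_of_pos hr,
    ← ENNReal.ofReal_mul (by positivity), ← ENNReal.ofReal_mul (by positivity),
    ← ENNReal.ofReal_mul (by positivity), ← ofReal_norm,
    ENNReal.ofReal_le_ofReal_iff (by positivity)] at outer
  refine (Real.le_norm_self _).trans (outer.trans ?_)
  rw [← mul_assoc]
  refine mul_le_mul_of_nonneg_right ?_ hrq
  have hK2 : 0 < 8 * K ^ 2 := by positivity
  have := mul_le_mul_of_nonneg_left hAq hK2.le
  rw [mul_inv_cancel₀ hK2.ne'] at this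
  nlinarith
end
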